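/- arXiv:1401.6139 — 7 statements merged into one kernel-verified Lean document; each statement's English description precedes it below -/
import Mathlib

section
/- Let k be a commutative ring, L a Lie algebra over k, and let x_0, x_1, …, x_n and y_0, y_1, …, y_m be elements of L. Then ⁅leftComb(x_0,…,x_n), leftComb(y_0,…,y_m)⁆ = Σ_{S ⊆ {1,…,m}} (-1)^{|S|} · leftComb(x_0,…,x_n, y_{s_1},…,y_{s_r}, y_0, y_{t_1},…,y_{t_{m-r}}), where for each subset S the elements of S are listed in decreasing order s_1 > s_2 > … > s_r and the elements of {1,…,m} ∖ S are listed in increasing order t_1 < t_2 < … < t_{m-r}. -/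
/-- The left-comb iterated bracket: `leftComb a [b₁,…,bₚ] = [[…[[a,b₁],b₂],…],bₚ]`. -/
def leftComb {L : Type*} [LieRing L] (a : L) (l : List L) : L :=
  l.foldl (fun x y => ⁅x, y⁆) a

/-!
Since `leftComb y₀ (y₁, …, yₘ) = leftComb ⁅y₀, y₁⁆ (y₂, …, yₘ)`, by induction its bracket with `x`
is a signed sum of left combs with one entry `⁅y₀, y₁⁆`. The Jacobi identity
`⁅z, ⁅y₀, y₁⁆⁆ = ⁅⁅z, y₀⁆, y₁⁆ - ⁅⁅z, y₁⁆, y₀⁆` replaces that entry by `y₀, y₁`, or by `y₁, y₀` with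
a minus sign. As `1` is the smallest index, `y₁` starts the increasing list after `y₀` in the first
case (`1 ∉ S`) and ends the decreasing list before `y₀` in the second (`1 ∈ S`).
-/

section leftComb

variable {L : Type*} [LieRing L]

theorem leftComb_cons (a b : L) (l : List L) : leftComb a (b :: l) = leftComb ⁅a, b⁆ l :=
  rfl

theorem leftComb_append (a : L) (l₁ l₂ : List L) :
    leftComb a (l₁ ++ l₂) = leftComb (leftComb a l₁) l₂ :=
  List.foldl_append

theorem leftComb_sub (a b : L) (l : List L) :
    leftComb (a - b) l = leftComb a l - leftComb b l := by
  induction l generalizing a b with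
  | nil => rfl
  | cons c l ih => rw [leftComb_cons, sub_lie, ih, ← leftComb_cons, ← leftComb_cons]

theorem leftComb_append_lie_cons (x a b : L) (l₁ l₂ : List L) :
    leftComb x (l₁ ++ ⁅a, b⁆ :: l₂) =
      leftComb x (l₁ ++ a :: b :: l₂) - leftComb x (l₁ ++ b :: a :: l₂) := by
  have jacobi (z : L) : ⁅z, ⁅a, b⁆⁆ = ⁅⁅z, a⁆, b⁆ - ⁅⁅z, b⁆, a⁆ := by
    rw [leibniz_lie, ← lie_skew a, sub_eq_add_neg]
  simp only [leftComb_append, leftComb_cons, jacobi, leftComb_sub]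

theorem lie_leftComb_map_sort {ι : Type*} [LinearOrder ι] (x y₀ : L) (y : ι → L) (T : Finset ι) :
    ⁅x, leftComb y₀ ((T.sort (· ≤ ·)).map y)⁆ =
      ∑ S ∈ T.powerset, (-1 : ℤ) ^ S.card •
        leftComb x ((S.sort (· ≤ ·)).reverse.map y ++ y₀ :: ((T \ S).sort (· ≤ ·)).map y) := by
  induction T using Finset.induction_on_min generalizing y₀ with
  | empty => simp [leftComb]
  | insert a T a_lt ih =>
    have sort_insert {U : Finset ι} (hU : U ⊆ T) :
        (insert a U).sort (· ≤ ·) = a :: U.sort (· ≤ ·) :=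
      Finset.sort_insert (· ≤ ·) (fun b hb => (a_lt b (hU hb)).le)
        (fun ha => (a_lt a (hU ha)).false)
    have ha : a ∉ T := fun ha => (a_lt a ha).false
    rw [sort_insert subset_rfl, List.map_cons, leftComb_cons, ih, Finset.sum_powerset_insert ha,
      ← Finset.sum_add_distrib]
    refine Finset.sum_congr rfl fun S hS => ?_
    have hST : S ⊆ T := Finset.mem_powerset.1 hS
    have haS : a ∉ S := fun h => ha (hST h)
    rw [leftComb_append_lie_cons, Finset.insert_sdiff_of_notMem T haS,
      sort_insert Finset.sdiff_subset, Finset.insert_sdiff_insert,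
      Finset.sdiff_insert_of_notMem ha, sort_insert hST, Finset.card_insert_of_notMem haS]
    simp [pow_succ, sub_eq_add_neg]

end leftComb

/-- Lemma 4.7 ("crochet") of Hoffbeck–Vespa: rewriting the bracket of two left combs
as a signed sum of left combs, the subset `S` recording which of `y₁,…,yₘ` are placed
(in decreasing order) before `y₀`, the remaining ones being placed after `y₀` in
increasing order. -/
theorem bracket_leftComb_leftComb (k : Type*) [CommRing k] (L : Type*) [LieRing L]
    [LieAlgebra k L] (m : ℕ) (x0 : L) (xs : List L) (y0 : L) (y : Fin m → L) :
    ⁅leftComb x0 xs, leftComb y0 (List.ofFn y)⁆ =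
      ∑ S : Finset (Fin m), ((-1 : ℤ) ^ S.card) •
        leftComb x0 (xs ++ ((S.sort (· ≤ ·)).reverse.map y) ++
          (y0 :: ((Sᶜ.sort (· ≤ ·)).map y))) := by
  rw [List.ofFn_eq_map, ← Fin.sort_univ, lie_leftComb_map_sort, Finset.powerset_univ]
  simp only [Finset.compl_eq_univ_sdiff, List.append_assoc, leftComb_append x0 xs]
end

section
/- Let k be a commutative ring, A a Lie algebra over k, and M a Lie module over A; write [x,a] := -⁅a,x⁆ for the right action of a ∈ A on x ∈ M. Define C_n = M ⊗ A^{⊗n} and the k-linear map d : C_n → C_{n-1} by d(x ⊗ a_1 ⊗ … ⊗ a_n) = Σ_{1 ≤ i < j ≤ n} (-1)^j · x ⊗ a_1 ⊗ … ⊗ a_{i-1} ⊗ ⁅a_i,a_j⁆ ⊗ a_{i+1} ⊗ … ⊗ â_j ⊗ … ⊗ a_n + Σ_{1 ≤ j ≤ n} (-1)^j · [x,a_j] ⊗ a_1 ⊗ … ⊗ â_j ⊗ … ⊗ a_n, where â_j means the factor a_j is omitted. Then d ∘ d = 0, i.e. the composite C_n → C_{n-1} → C_{n-2} is zero for every n ≥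 2. -/
open scoped TensorProduct

/-!
Let `A` be a Leibniz algebra acting on `M`, for instance a Lie algebra and a Lie module over it, and
let `C n = M ⊗ A^{⊗n}`. Appending a last factor `b` gives maps `s b : C n → C (n+1)` whose images
span `C (n+1)`. Let `θ b` be the derivation of `C n` through which `b` acts on `M` and on every
factor `A`. In the last summand of `d` the last factor acts on everything before it, and in the
others it is left untouched, so that `d (s b c) = s b (d c) + (-1)ⁿ θ b c` for `c : C n`, the first
term being absent for `n = 0`. Since `θ ⁅a, b⁆ = ⁅θ a, θ b⁆` and
`θ a (s b c) = s b (θ a c) + s ⁅a, b⁆ c`, this recursion yields `d ∘ θ a = θ a ∘ d` by induction.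
Hence the terms `± θ b (d c)` and `∓ d (θ b c)` of `d (d (s b c))` cancel, leaving `s b (d (d c))`,
which vanishes by induction.
-/

/-- The module `M ⊗ A^{⊗n}` of Leibniz `n`-chains of `A` with coefficients in `M`. -/
abbrev LeibnizChain (k A M : Type*) [CommRing k] [AddCommGroup A] [Module k A]
    [AddCommGroup M] [Module k M] (n : ℕ) : Type _ :=
  M ⊗[k] (⨂[k]^n A)

namespace LeibnizChain

open PiTensorProduct (tprod)

lemma castSucc_removeNth_snoc {α : Type*} {n : ℕ} (j : Fin (n + 1)) (a : Fin (n + 1) → α) (b : α) :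
    j.castSucc.removeNth (Fin.snoc a b : Fin (n + 2) → α) =
      (Fin.snoc (j.removeNth a) b : Fin (n + 1) → α) := by
  ext l
  refine Fin.lastCases ?_ (fun l => ?_) l
  · simp [Fin.removeNth, Fin.succAbove_ne_last_last (Fin.castSucc_lt_last j).ne]
  · simp [Fin.removeNth, Fin.castSucc_succAbove_castSucc]

section Module

variable {k A M N : Type*} [CommRing k] [AddCommGroup A] [Module k A] [AddCommGroup M] [Module k M]
  [AddCommGroup N] [Module k N] {n : ℕ}

lemma hom_ext {f g : LeibnizChain k A M n →ₗ[k] N}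
    (h : ∀ (x : M) (a : Fin n → A), f (x ⊗ₜ tprod k a) = g (x ⊗ₜ tprod k a)) : f = g := by
  ext x a
  exact h x a

/-- The map `x ⊗ a₁ ⊗ … ⊗ aₙ ↦ x ⊗ a₁ ⊗ … ⊗ aₙ ⊗ b` appending a last tensor factor, as a linear
function of `b`. -/
noncomputable def snoc : A →ₗ[k] LeibnizChain k A M n →ₗ[k] LeibnizChain k A M (n + 1) :=
  LinearMap.lTensorHom M ∘ₗ
    (PiTensorProduct.lift (tprod k (s := fun _ : Fin (n + 1) => A)).curryRight).flip

@[simp]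
lemma snoc_tmul_tprod (b : A) (x : M) (a : Fin n → A) :
    snoc b (x ⊗ₜ[k] tprod k a) = x ⊗ₜ tprod k (Fin.snoc a b : Fin (n + 1) → A) := by
  simp [snoc]

lemma hom_ext_snoc {f g : LeibnizChain k A M (n + 1) →ₗ[k] N}
    (h : ∀ b c, f (snoc b c) = g (snoc b c)) : f = g := by
  refine hom_ext fun x a => ?_
  simpa using h (a (Fin.last n)) (x ⊗ₜ tprod k (Fin.init a))

/-- The extension of endomorphisms `f` of `M` and `D` of `A` to a derivation of `M ⊗ A^{⊗n}`:
the sum of the endomorphisms applying `f` or `D` to a single tensor factor. -/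
noncomputable def derivation (f : Module.End k M) (D : Module.End k A) (n : ℕ) :
    Module.End k (LeibnizChain k A M n) :=
  f.rTensor _ + ∑ i, LinearMap.lTensor M
    (PiTensorProduct.map (Function.update (fun _ => LinearMap.id) i D))

lemma derivation_tmul_tprod (f : Module.End k M) (D : Module.End k A) (x : M) (a : Fin n → A) :
    derivation f D n (x ⊗ₜ tprod k a) =
      f x ⊗ₜ tprod k a + ∑ i, x ⊗ₜ tprod k (Function.update a i (D (a i))) := by
  have apply_update (i : Fin n) :
      (fun l => Function.update (fun _ => (LinearMap.id : Module.End k A)) i D l (a l)) =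
        Function.update a i (D (a i)) := by
    ext l
    rcases eq_or_ne l i with rfl | hl
    · simp
    · simp [hl]
  simp [derivation, apply_update]

lemma derivation_snoc (f : Module.End k M) (D : Module.End k A) (b : A)
    (c : LeibnizChain k A M n) :
    derivation f D (n + 1) (snoc b c) = snoc b (derivation f D n c) + snoc (D b) c := by
  suffices h : derivation f D (n + 1) ∘ₗ snoc b = snoc b ∘ₗ derivation f D n + snoc (D b) from
    LinearMap.congr_fun h c
  refine hom_ext fun x a => ?_
  simp [derivation_tmul_tprod, Fin.sum_univ_castSucc, Fin.snoc_update, Fin.update_snoc_last,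
    add_assoc]

lemma derivation_lie (f g : Module.End k M) (D E : Module.End k A) (n : ℕ) :
    derivation ⁅f, g⁆ ⁅D, E⁆ n = ⁅derivation f D n, derivation g E n⁆ := by
  induction n with
  | zero =>
    refine hom_ext fun x a => ?_
    simp [derivation_tmul_tprod, Ring.lie_def, TensorProduct.sub_tmul]
  | succ n ih =>
    refine hom_ext_snoc fun b c => ?_
    rw [derivation_snoc, ih]
    simp only [derivation_snoc, Ring.lie_def, LinearMap.sub_apply, Module.End.mul_apply, map_add,
      map_sub]
    abel

end Module

section Leibniz

variable {k A M : Type*} [CommRing k] [AddCommGroup A] [Module k A] [AddCommGroup M] [Module k M]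
  {n : ℕ}

/-- The bracket `⁅a, b⁆ = ad a b` makes `A` a (left) Leibniz algebra, and `ρ` is an action of it
on `M`. The right bracket of the Leibniz complex is `[b, a] = -ad a b`. -/
structure IsLeibnizAction (ad : A →ₗ[k] Module.End k A) (ρ : A →ₗ[k] Module.End k M) : Prop where
  ad_lie (a b : A) : ad (ad a b) = ⁅ad a, ad b⁆
  act_lie (a b : A) : ρ (ad a b) = ⁅ρ a, ρ b⁆

variable {ad : A →ₗ[k] Module.End k A} {ρ : A →ₗ[k] Module.End k M}

lemma IsLeibnizAction.derivation_derivation (h : IsLeibnizAction ad ρ) (a b : A)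
    (c : LeibnizChain k A M n) :
    derivation (ρ a) (ad a) n (derivation (ρ b) (ad b) n c) =
      derivation (ρ b) (ad b) n (derivation (ρ a) (ad a) n c) +
        derivation (ρ (ad a b)) (ad (ad a b)) n c := by
  rw [h.act_lie, h.ad_lie, derivation_lie, Ring.lie_def]
  simp

variable (ad ρ) in
/-- The `j`-th summand of the Leibniz differential of `x ⊗ a₁ ⊗ … ⊗ aₙ₊₁`, up to sign: the factor
`a j` is removed and acts on `x` and on the factors to its left. -/
noncomputable def face (j : Fin (n + 1)) (x : M) (a : Fin (n + 1) → A) : LeibnizChain k A M n :=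
  ∑ i : Fin n with i.castSucc < j,
      x ⊗ₜ tprod k (Function.update (j.removeNth a) i (ad (a j) (a i.castSucc))) +
    ρ (a j) x ⊗ₜ tprod k (j.removeNth a)

variable (ad ρ) in
/-- The maps `d` form the differential of the Leibniz complex. The sign is `(-1) ^ j` because `j`
is counted from `0` and `face` uses the left actions `ad` and `ρ` in place of the right ones. -/
def IsDifferential (d : ∀ n, LeibnizChain k A M (n + 1) →ₗ[k] LeibnizChain k A M n) : Prop :=
  ∀ n x a, d n (x ⊗ₜ tprod k a) = ∑ j : Fin (n + 1), (-1 : ℤ) ^ (j : ℕ) • face ad ρ j x a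

lemma face_last_snoc (x : M) (a : Fin n → A) (b : A) :
    face ad ρ (Fin.last n) x (Fin.snoc a b : Fin (n + 1) → A) =
      derivation (ρ b) (ad b) n (x ⊗ₜ tprod k a) := by
  simp [face, derivation_tmul_tprod, Fin.castSucc_lt_last, add_comm]

lemma face_castSucc_snoc (j : Fin (n + 1)) (x : M) (a : Fin (n + 1) → A) (b : A) :
    face ad ρ j.castSucc x (Fin.snoc a b : Fin (n + 2) → A) = snoc b (face ad ρ j x a) := by
  simp [face, castSucc_removeNth_snoc, Finset.sum_filter, Fin.sum_univ_castSucc, Fin.snoc_update,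
    apply_ite (snoc b), Fin.le_last]

namespace IsDifferential

variable {d : ∀ n, LeibnizChain k A M (n + 1) →ₗ[k] LeibnizChain k A M n}

lemma apply_snoc_zero (hd : IsDifferential ad ρ d) (b : A) (c : LeibnizChain k A M 0) :
    d 0 (snoc b c) = derivation (ρ b) (ad b) 0 c := by
  suffices h : d 0 ∘ₗ snoc b = derivation (ρ b) (ad b) 0 from LinearMap.congr_fun h c
  refine hom_ext fun x a => ?_
  simp [hd 0, ← face_last_snoc]

lemma apply_snoc_succ (hd : IsDifferential ad ρ d) (b : A) (c : LeibnizChain k A M (n + 1)) :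
    d (n + 1) (snoc b c) =
      snoc b (d n c) + (-1 : ℤ) ^ (n + 1) • derivation (ρ b) (ad b) (n + 1) c := by
  suffices h : d (n + 1) ∘ₗ snoc b =
      snoc b ∘ₗ d n + (-1 : ℤ) ^ (n + 1) • derivation (ρ b) (ad b) (n + 1) from
    LinearMap.congr_fun h c
  refine hom_ext fun x a => ?_
  rw [LinearMap.add_apply, LinearMap.smul_apply]
  simp [hd n, hd (n + 1), Fin.sum_univ_castSucc (n := n + 1), face_castSucc_snoc, face_last_snoc]

lemma comp_derivation (hd : IsDifferential ad ρ d) (h : IsLeibnizAction ad ρ) (a : A) (n : ℕ) :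
    d n ∘ₗ derivation (ρ a) (ad a) (n + 1) = derivation (ρ a) (ad a) n ∘ₗ d n := by
  induction n with
  | zero =>
    refine hom_ext_snoc fun b c => ?_
    simp [derivation_snoc, hd.apply_snoc_zero, h.derivation_derivation a]
  | succ n ih =>
    refine hom_ext_snoc fun b c => ?_
    have ih_apply := LinearMap.congr_fun ih c
    simp only [LinearMap.comp_apply] at ih_apply
    simp only [LinearMap.comp_apply, derivation_snoc, hd.apply_snoc_succ, map_add, map_zsmul,
      ih_apply, h.derivation_derivation a, smul_add]
    abel

end IsDifferential

end Leibniz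

section Lie

variable {k A M : Type*} [CommRing k] [LieRing A] [LieAlgebra k A] [AddCommGroup M] [Module k M]
  [LieRingModule A M] [LieModule k A M]

lemma isLeibnizAction_ad_toEnd :
    IsLeibnizAction (LieAlgebra.ad k A : A →ₗ[k] Module.End k A)
      (LieModule.toEnd k A M : A →ₗ[k] Module.End k M) where
  ad_lie a b := LinearMap.ext fun c => lie_lie a b c
  act_lie a b := LinearMap.ext fun x => lie_lie a b x

lemma neg_face_ad_toEnd {n : ℕ} (j : Fin (n + 1)) (x : M) (a : Fin (n + 1) → A) :
    -face (LieAlgebra.ad k A : A →ₗ[k] Module.End k A)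
        (LieModule.toEnd k A M : A →ₗ[k] Module.End k M) j x a =
      ∑ i : Fin n with i.castSucc < j,
          x ⊗ₜ tprod k (Function.update (j.removeNth a) i ⁅a i.castSucc, a j⁆) +
        (-⁅a j, x⁆) ⊗ₜ tprod k (j.removeNth a) := by
  have tprod_update_lie (i : Fin n) :
      tprod k (Function.update (j.removeNth a) i ⁅a i.castSucc, a j⁆) =
        -tprod k (Function.update (j.removeNth a) i ⁅a j, a i.castSucc⁆) := by
    rw [← lie_skew, MultilinearMap.map_update_neg]
  simp [face, tprod_update_lie, TensorProduct.neg_tmul, TensorProduct.tmul_neg, add_comm]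

lemma isDifferential_ad_toEnd_iff
    {d : ∀ n, LeibnizChain k A M (n + 1) →ₗ[k] LeibnizChain k A M n} :
    IsDifferential (LieAlgebra.ad k A : A →ₗ[k] Module.End k A)
        (LieModule.toEnd k A M : A →ₗ[k] Module.End k M) d ↔
      ∀ (n : ℕ) (x : M) (a : Fin (n + 1) → A), d n (x ⊗ₜ tprod k a) =
        (∑ j : Fin (n + 1), ∑ i : Fin n, if (i : ℕ) < (j : ℕ) then (-1 : ℤ) ^ ((j : ℕ) + 1) •
            (x ⊗ₜ tprod k (Function.update (j.removeNth a) i ⁅a i.castSucc, a j⁆)) else 0) +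
          ∑ j : Fin (n + 1), (-1 : ℤ) ^ ((j : ℕ) + 1) •
            ((-⁅a j, x⁆) ⊗ₜ tprod k (j.removeNth a)) := by
  refine forall₃_congr fun n x a => ?_
  have sign_smul (j : Fin (n + 1)) (c : LeibnizChain k A M n) :
      (-1 : ℤ) ^ (j : ℕ) • c = (-1 : ℤ) ^ ((j : ℕ) + 1) • -c := by
    simp [pow_succ]
  simp only [sign_smul, neg_face_ad_toEnd, smul_add, Finset.smul_sum, Finset.sum_add_distrib,
    Finset.sum_filter, smul_ite, smul_zero, Fin.lt_def, Fin.val_castSucc]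

end Lie

end LeibnizChain

open LeibnizChain in
theorem leibniz_d_squared_zero_general {k A M : Type*} [CommRing k] [AddCommGroup A] [Module k A]
    [AddCommGroup M] [Module k M] {ad : A →ₗ[k] Module.End k A} {ρ : A →ₗ[k] Module.End k M}
    (h : IsLeibnizAction ad ρ)
    {d : ∀ n, LeibnizChain k A M (n + 1) →ₗ[k] LeibnizChain k A M n}
    (hd : IsDifferential ad ρ d) (n : ℕ) : d n ∘ₗ d (n + 1) = 0 := by
  have d_derivation (a : A) (m : ℕ) (c : LeibnizChain k A M (m + 1)) :
      d m (derivation (ρ a) (ad a) (m + 1) c) = derivation (ρ a) (ad a) m (d m c) :=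
    LinearMap.congr_fun (hd.comp_derivation h a m) c
  induction n with
  | zero =>
    refine hom_ext_snoc fun b c => ?_
    simp [hd.apply_snoc_succ, hd.apply_snoc_zero, d_derivation]
  | succ n ih =>
    refine hom_ext_snoc fun b c => ?_
    have d_d_c : d n (d (n + 1) c) = 0 := LinearMap.congr_fun ih c
    simp [hd.apply_snoc_succ, d_derivation, d_d_c, pow_succ]

/-- The Leibniz differential of a Lie algebra `A` with coefficients in a Lie module `M`
squares to zero.  Here `Cₙ = M ⊗ A^{⊗n}` and `d : C_{n+1} → C_n` is the `k`-linear map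
determined on pure tensors `x ⊗ a₁ ⊗ … ⊗ a_{n+1}` (encoded via `a : Fin (n+1) → A`) by
`d(x ⊗ a₁ ⊗ … ⊗ a_{n+1}) = Σ_{i<j} (-1)^j x ⊗ … ⊗ ⁅aᵢ,aⱼ⁆ ⊗ … ⊗ âⱼ ⊗ …
  + Σ_j (-1)^j [x,aⱼ] ⊗ … ⊗ âⱼ ⊗ …`, with `[x,a] = -⁅a,x⁆`. -/
theorem leibniz_d_squared_zero (k : Type*) [CommRing k]
    (A : Type*) [LieRing A] [LieAlgebra k A]
    (M : Type*) [AddCommGroup M] [Module k M] [LieRingModule A M] [LieModule k A M]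
    (d : ∀ n : ℕ, (M ⊗[k] (⨂[k]^(n+1) A)) →ₗ[k] (M ⊗[k] (⨂[k]^n A)))
    (hd : ∀ (n : ℕ) (x : M) (a : Fin (n+1) → A),
      d n (x ⊗ₜ[k] PiTensorProduct.tprod k a) =
        (∑ j : Fin (n+1), ∑ i : Fin n,
          if (i : ℕ) < (j : ℕ) then
            ((-1 : ℤ) ^ ((j : ℕ) + 1)) •
              (x ⊗ₜ[k] PiTensorProduct.tprod k
                (Function.update (fun l : Fin n => a (j.succAbove l)) i ⁅a i.castSucc, a j⁆))
          else 0)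
        + ∑ j : Fin (n+1), ((-1 : ℤ) ^ ((j : ℕ) + 1)) •
            ((-⁅a j, x⁆) ⊗ₜ[k] PiTensorProduct.tprod k (fun l : Fin n => a (j.succAbove l)))) :
    ∀ n : ℕ, (d n).comp (d (n+1)) = 0 := by
  exact leibniz_d_squared_zero_general LeibnizChain.isLeibnizAction_ad_toEnd
    (LeibnizChain.isDifferential_ad_toEnd_iff.2 hd)
end

section
/- For natural numbers n ≥ m, the set STuple(n,m) of m-split (n+1)-tuples is in bijection with the set of pairs (α, (w_0, …, w_m)) where α : {0,…,n} → {0,…,m} is a surjection satisfying min α^{-1}(i) < min α^{-1}(j) whenever i < j, and each w_i is a list enumerating the set α^{-1}(i) ∖ {min α^{-1}(i)} without repetition. The bijection sends (B_0 | … | B_m) to the pair where α maps every entry of B_i to i, and w_i is the tail of the block B_i (the block B_i with its head removed). -/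
/-!
The blocks of a split tuple partition `{0, …, n}`, so they are the fibres of the map `α` sending
an entry to the index of its block. The head of a block is the minimum of its fibre: hence the
heads increase exactly when `α` is shuffling, and the tail of `Bᵢ` enumerates
`α⁻¹(i) ∖ {min α⁻¹(i)}`. Conversely, prepending `min α⁻¹(i)` to `wᵢ` recovers `Bᵢ`.
-/

/-- `IsSTuple n m B`: the family of blocks `B₀, …, Bₘ` is an `m`-split `(n+1)`-tuple. -/
def IsSTuple (n m : ℕ) (B : Fin (m + 1) → List ℕ) : Prop :=
  (∀ i, B i ≠ []) ∧
  ((List.ofFn B).flatten.Perm (List.range (n + 1))) ∧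
  (∀ i j : Fin (m + 1), i < j → (B i).headI < (B j).headI) ∧
  (∀ i : Fin (m + 1), ∀ x ∈ (B i).tail, (B i).headI < x)

/-- The set `STuple(n,m)` of `m`-split `(n+1)`-tuples. -/
structure STuple (n m : ℕ) where
  B : Fin (m + 1) → List ℕ
  prop : IsSTuple n m B

/-- A pair `(α, (w₀,…,wₘ))` where `α : {0,…,n} → {0,…,m}` is a surjection such that
`min α⁻¹(i) < min α⁻¹(j)` whenever `i < j` (a shuffling surjection), and each `wᵢ` is a
list enumerating the set `α⁻¹(i) ∖ {min α⁻¹(i)}` without repetition. -/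
structure ShufflePair (n m : ℕ) where
  α : Fin (n + 1) → Fin (m + 1)
  surj : Function.Surjective α
  shuffle : ∀ i j : Fin (m + 1), i < j →
    ∃ x : Fin (n + 1), α x = i ∧ ∀ y : Fin (n + 1), α y = j → x < y
  w : Fin (m + 1) → List ℕ
  nodup : ∀ i, (w i).Nodup
  mem_w : ∀ (i : Fin (m + 1)) (x : ℕ), x ∈ w i ↔
    ∃ hx : x < n + 1, α ⟨x, hx⟩ = i ∧ ∃ y : Fin (n + 1), α y = i ∧ (y : ℕ) < x

section ListFamilies

variable {α : Type*} {k : ℕ} {B : Fin k → List α}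

theorem mem_flatten_ofFn {x : α} : x ∈ (List.ofFn B).flatten ↔ ∃ i, x ∈ B i := by
  simp only [List.mem_flatten, List.mem_ofFn, exists_exists_eq_and]

theorem nodup_flatten_ofFn :
    (List.ofFn B).flatten.Nodup ↔ (∀ i, (B i).Nodup) ∧ ∀ i j x, x ∈ B i → x ∈ B j → i = j := by
  rw [List.nodup_flatten, List.pairwise_ofFn, List.forall_mem_ofFn_iff]
  refine and_congr_right fun _ => ⟨fun disjoint i j x hi hj => ?_, fun unique i j hij x hi hj => ?_⟩
  · rcases lt_trichotomy i j with hij | hij | hij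
    · exact (disjoint hij hi hj).elim
    · exact hij
    · exact (disjoint hij hj hi).elim
  · exact hij.ne (unique i j x hi hj)

theorem flatten_ofFn_perm_iff {l : List α} (hl : l.Nodup) :
    (List.ofFn B).flatten.Perm l ↔
      (∀ i, (B i).Nodup) ∧ (∀ i j x, x ∈ B i → x ∈ B j → i = j) ∧
        ∀ x, (∃ i, x ∈ B i) ↔ x ∈ l := by
  rw [← and_assoc, ← nodup_flatten_ofFn]
  simp only [← mem_flatten_ofFn]
  exact ⟨fun h => ⟨h.nodup_iff.2 hl, fun _ => h.mem_iff⟩,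
    fun ⟨hB, hmem⟩ => (List.perm_ext_iff_of_nodup hB hl).2 hmem⟩

theorem headI_cons_tail [Inhabited α] {l : List α} (hl : l ≠ []) : l.headI :: l.tail = l := by
  cases l with
  | nil => exact (hl rfl).elim
  | cons => rfl

end ListFamilies

section Fibers

variable {ι : Type*} {k : ℕ} {f : Fin k → ι} {i j : ι} {a b x : ℕ}

/-- The fibre of `f : {0, …, k - 1} → ι` over `i`, as a set of natural numbers rather than of
elements of `Fin k`, so that it can be compared with the entries of a list of natural numbers. -/
def natFiber (f : Fin k → ι) (i : ι) : Set ℕ := {x | ∃ hx : x < k, f ⟨x, hx⟩ = i}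

theorem val_mem_natFiber {y : Fin k} : (y : ℕ) ∈ natFiber f i ↔ f y = i :=
  ⟨fun ⟨_, hy⟩ => hy, fun hy => ⟨y.2, hy⟩⟩

theorem surjective_iff_natFiber_nonempty : f.Surjective ↔ ∀ i, (natFiber f i).Nonempty :=
  forall_congr' fun _ => ⟨fun ⟨_, hy⟩ => ⟨_, val_mem_natFiber.2 hy⟩, fun ⟨_, _, hy⟩ => ⟨_, hy⟩⟩

theorem exists_forall_lt_iff_of_isLeast_natFiber
    (ha : IsLeast (natFiber f i) a) (hb : IsLeast (natFiber f j) b) :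
    (∃ x, f x = i ∧ ∀ y, f y = j → x < y) ↔ a < b := by
  constructor
  · rintro ⟨x, hx, hlt⟩
    obtain ⟨hbk, hbj⟩ := hb.1
    exact (ha.2 (val_mem_natFiber.2 hx)).trans_lt (hlt ⟨b, hbk⟩ hbj)
  · intro hab
    obtain ⟨hak, hai⟩ := ha.1
    exact ⟨⟨a, hak⟩, hai, fun y hy => hab.trans_le (hb.2 (val_mem_natFiber.2 hy))⟩

theorem exists_lt_iff_mem_natFiber_sdiff (ha : IsLeast (natFiber f i) a) :
    (∃ hx : x < k, f ⟨x, hx⟩ = i ∧ ∃ y, f y = i ∧ (y : ℕ) < x) ↔ x ∈ natFiber f i \ {a} := by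
  constructor
  · rintro ⟨hxk, hxi, y, hy, hyx⟩
    exact ⟨⟨hxk, hxi⟩, ((ha.2 (val_mem_natFiber.2 hy)).trans_lt hyx).ne'⟩
  · rintro ⟨⟨hxk, hxi⟩, hxa⟩
    obtain ⟨hak, hai⟩ := ha.1
    exact ⟨hxk, hxi, ⟨a, hak⟩, hai, (ha.2 ⟨hxk, hxi⟩).lt_of_ne' hxa⟩

end Fibers

attribute [ext] STuple ShufflePair

namespace STuple

variable {n m : ℕ} (b : STuple n m)

theorem nodup_block (i : Fin (m + 1)) : (b.B i).Nodup :=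
  ((flatten_ofFn_perm_iff List.nodup_range).1 b.prop.2.1).1 i

theorem eq_of_mem_block {i j : Fin (m + 1)} {x : ℕ} (hi : x ∈ b.B i) (hj : x ∈ b.B j) : i = j :=
  ((flatten_ofFn_perm_iff List.nodup_range).1 b.prop.2.1).2.1 i j x hi hj

theorem exists_mem_block_iff {x : ℕ} : (∃ i, x ∈ b.B i) ↔ x < n + 1 :=
  (((flatten_ofFn_perm_iff List.nodup_range).1 b.prop.2.1).2.2 x).trans List.mem_range

theorem headI_cons_tail_block (i : Fin (m + 1)) : (b.B i).headI :: (b.B i).tail = b.B i :=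
  headI_cons_tail (b.prop.1 i)

theorem mem_block_iff {i : Fin (m + 1)} {x : ℕ} :
    x ∈ b.B i ↔ x = (b.B i).headI ∨ x ∈ (b.B i).tail := by
  rw [← List.mem_cons, b.headI_cons_tail_block]

theorem mem_tail_iff {i : Fin (m + 1)} {x : ℕ} :
    x ∈ (b.B i).tail ↔ x ∈ b.B i ∧ x ≠ (b.B i).headI := by
  rw [b.mem_block_iff]
  exact ⟨fun hx => ⟨Or.inr hx, (b.prop.2.2.2 i x hx).ne'⟩, fun ⟨hx, hne⟩ => hx.resolve_left hne⟩

/-- The map `α` sending each entry of the split tuple to the index of the block containing it. -/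
noncomputable def blockIndex (x : Fin (n + 1)) : Fin (m + 1) :=
  (b.exists_mem_block_iff.2 x.2).choose

theorem blockIndex_eq_iff (x : Fin (n + 1)) (i : Fin (m + 1)) :
    b.blockIndex x = i ↔ (x : ℕ) ∈ b.B i := by
  have hx : (x : ℕ) ∈ b.B (b.blockIndex x) := (b.exists_mem_block_iff.2 x.2).choose_spec
  exact ⟨fun h => h ▸ hx, b.eq_of_mem_block hx⟩

theorem mem_natFiber_blockIndex {i : Fin (m + 1)} {x : ℕ} :
    x ∈ natFiber b.blockIndex i ↔ x ∈ b.B i :=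
  ⟨fun ⟨_, hx⟩ => (b.blockIndex_eq_iff _ i).1 hx,
    fun hx => ⟨b.exists_mem_block_iff.1 ⟨i, hx⟩, (b.blockIndex_eq_iff _ i).2 hx⟩⟩

theorem isLeast_headI (i : Fin (m + 1)) : IsLeast (natFiber b.blockIndex i) (b.B i).headI := by
  refine ⟨b.mem_natFiber_blockIndex.2 (b.mem_block_iff.2 (Or.inl rfl)), fun x hx => ?_⟩
  rcases b.mem_block_iff.1 (b.mem_natFiber_blockIndex.1 hx) with rfl | hx
  · exact le_rfl
  · exact (b.prop.2.2.2 i x hx).le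

/-- The pair `(α, (w₀, …, wₘ))` of a split tuple: `α` is the block-index map and `wᵢ` is the tail
of the `i`-th block. -/
noncomputable def toShufflePair : ShufflePair n m where
  α := b.blockIndex
  surj := surjective_iff_natFiber_nonempty.2 fun i => (b.isLeast_headI i).nonempty
  shuffle i j hij :=
    (exists_forall_lt_iff_of_isLeast_natFiber (b.isLeast_headI i) (b.isLeast_headI j)).2
      (b.prop.2.2.1 i j hij)
  w i := (b.B i).tail
  nodup i := (b.nodup_block i).tail
  mem_w i x := by
    rw [exists_lt_iff_mem_natFiber_sdiff (b.isLeast_headI i), Set.mem_sdiff_singleton,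
      b.mem_natFiber_blockIndex, b.mem_tail_iff]

end STuple

namespace ShufflePair

variable {n m : ℕ} (p : ShufflePair n m)

/-- `min α⁻¹(i)`, as a natural number; the fibre is nonempty because `α` is surjective. -/
noncomputable def fiberMin (i : Fin (m + 1)) : ℕ := sInf (natFiber p.α i)

theorem isLeast_fiberMin (i : Fin (m + 1)) : IsLeast (natFiber p.α i) (p.fiberMin i) :=
  isLeast_csInf (surjective_iff_natFiber_nonempty.1 p.surj i)

theorem fiberMin_strictMono : StrictMono p.fiberMin := fun i j hij =>
  (exists_forall_lt_iff_of_isLeast_natFiber (p.isLeast_fiberMin i) (p.isLeast_fiberMin j)).1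
    (p.shuffle i j hij)

theorem mem_w_iff {i : Fin (m + 1)} {x : ℕ} : x ∈ p.w i ↔ x ∈ natFiber p.α i \ {p.fiberMin i} :=
  (p.mem_w i x).trans (exists_lt_iff_mem_natFiber_sdiff (p.isLeast_fiberMin i))

theorem fiberMin_lt_of_mem_w {i : Fin (m + 1)} {x : ℕ} (hx : x ∈ p.w i) : p.fiberMin i < x :=
  have ⟨hxi, hne⟩ := p.mem_w_iff.1 hx
  ((p.isLeast_fiberMin i).2 hxi).lt_of_ne' hne

theorem mem_fiberMin_cons_w {i : Fin (m + 1)} {x : ℕ} :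
    x ∈ p.fiberMin i :: p.w i ↔ x ∈ natFiber p.α i := by
  rw [List.mem_cons, p.mem_w_iff, ← Set.mem_insert_iff, Set.insert_sdiff_singleton,
    Set.insert_eq_of_mem (p.isLeast_fiberMin i).1]

theorem nodup_fiberMin_cons_w (i : Fin (m + 1)) : (p.fiberMin i :: p.w i).Nodup :=
  (p.nodup i).cons fun h => (p.fiberMin_lt_of_mem_w h).false

theorem flatten_fiberMin_cons_w_perm_range :
    (List.ofFn fun i => p.fiberMin i :: p.w i).flatten.Perm (List.range (n + 1)) := by
  simp only [flatten_ofFn_perm_iff List.nodup_range, mem_fiberMin_cons_w, List.mem_range]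
  refine ⟨p.nodup_fiberMin_cons_w, ?_, fun x => ?_⟩
  · rintro _ _ x ⟨_, rfl⟩ ⟨_, rfl⟩
    rfl
  · exact ⟨fun ⟨_, hx, _⟩ => hx, fun hx => ⟨p.α ⟨x, hx⟩, hx, rfl⟩⟩

/-- The split tuple of a pair `(α, (w₀, …, wₘ))`: its `i`-th block is `min α⁻¹(i)` followed by
`wᵢ`. -/
noncomputable def toSTuple : STuple n m where
  B i := p.fiberMin i :: p.w i
  prop := ⟨fun _ => List.cons_ne_nil _ _, p.flatten_fiberMin_cons_w_perm_range,
    fun _ _ hij => p.fiberMin_strictMono hij, fun _ _ hx => p.fiberMin_lt_of_mem_w hx⟩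

theorem toShufflePair_toSTuple : p.toSTuple.toShufflePair = p := by
  refine ShufflePair.ext (funext fun x => ?_) rfl
  exact (p.toSTuple.blockIndex_eq_iff x _).2 (p.mem_fiberMin_cons_w.2 (val_mem_natFiber.2 rfl))

end ShufflePair

namespace STuple

variable {n m : ℕ}

theorem toSTuple_toShufflePair (b : STuple n m) : b.toShufflePair.toSTuple = b := by
  refine STuple.ext (funext fun i => ?_)
  have hmin : b.toShufflePair.fiberMin i = (b.B i).headI := (b.isLeast_headI i).csInf_eq
  calc b.toShufflePair.toSTuple.B i
      = b.toShufflePair.fiberMin i :: (b.B i).tail := rfl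
    _ = (b.B i).headI :: (b.B i).tail := by rw [hmin]
    _ = b.B i := b.headI_cons_tail_block i

/-- The bijection `(B₀ | … | Bₘ) ↦ (α, (w₀, …, wₘ))`, with the prepending of the fibre minima as
its inverse. -/
noncomputable def equivShufflePair : STuple n m ≃ ShufflePair n m where
  toFun := toShufflePair
  invFun := ShufflePair.toSTuple
  left_inv := toSTuple_toShufflePair
  right_inv := ShufflePair.toShufflePair_toSTuple

end STuple

/-- Lemma 4.16 of Hoffbeck–Vespa: for `m ≤ n` the set of `m`-split `(n+1)`-tuples is in
bijection with pairs of a shuffling surjection `α` and enumerations `wᵢ` of the fibers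
minus their minima; the bijection sends `(B₀ | … | Bₘ)` to the pair where `α` maps every
entry of `Bᵢ` to `i` and `wᵢ` is the tail of the block `Bᵢ`. -/
theorem sTuple_equiv_shufflePair (n m : ℕ) (h : m ≤ n) :
    ∃ e : STuple n m ≃ ShufflePair n m,
      ∀ (b : STuple n m) (i : Fin (m + 1)),
        (∀ x : Fin (n + 1), (x : ℕ) ∈ b.B i → (e b).α x = i) ∧
        (e b).w i = (b.B i).tail := by
  exact ⟨STuple.equivShufflePair,
    fun b i => ⟨fun x hx => (b.blockIndex_eq_iff x i).2 hx, rfl⟩⟩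
end

section
/- Let u = (u_0, u_1, …, u_n) ∈ Tuple(n) and let T = {i_1 < i_2 < … < i_m} ⊆ {1,…,n}. Let (B_0 | B_1 | … | B_m) be the splitting of u at the positions of T, i.e. B_0 = (u_0,…,u_{i_1-1}), B_1 = (u_{i_1},…,u_{i_2-1}), …, B_m = (u_{i_m},…,u_n). Then (B_0 | … | B_m) is an m-split (n+1)-tuple if and only if T ⊆ Cuts(u). Consequently, the set of split tuples b (over all m) with p(b) = u is in bijection with the power set of Cuts(u). -/
/-- `Tuple(n)`: lists containing each element of `{0,…,n}` exactly once, starting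
with `0`. -/
def IsTuple (n : ℕ) (u : List ℕ) : Prop :=
  u.Perm (List.range (n + 1)) ∧ u.headI = 0

/-- `Cuts u`: the set of admissible cuts of `u ∈ Tuple(n)`, i.e. indices `1 ≤ i ≤ n`
such that `u_j > u_i` for every `j` with `i < j ≤ n`. -/
def Cuts (n : ℕ) (u : List ℕ) : Finset ℕ :=
  (Finset.Icc 1 n).filter (fun i => ∀ j ∈ Finset.Ioc i n, u.getD i 0 < u.getD j 0)

section HeadOrder

variable {α : Type*} [Inhabited α]

section LT

variable [LT α]

/-- The head of `v` is strictly smaller than every other entry of `v`. For `v = []` this holds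
vacuously. -/
def HeadLtTail (v : List α) : Prop :=
  ∀ x ∈ v.tail, v.headI < x

/-- The order conditions on the blocks of a split tuple: the heads increase, and each head is
strictly smaller than the rest of its block. -/
def HeadOrdered (L : List (List α)) : Prop :=
  L.Pairwise (fun b b' => b.headI < b'.headI) ∧ ∀ b ∈ L, HeadLtTail b

theorem headLtTail_append_iff {b : List α} (hb : b ≠ []) (w : List α) :
    HeadLtTail (b ++ w) ↔ HeadLtTail b ∧ ∀ x ∈ w, b.headI < x := by
  obtain ⟨c, v, rfl⟩ := List.exists_cons_of_ne_nil hb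
  exact List.forall_mem_append

theorem headLtTail_drop_iff (v : List α) (t : ℕ) :
    HeadLtTail (v.drop t) ↔ ∀ j ∈ Finset.Ioo t v.length, v.getI t < v.getI j := by
  have head_eq : (v.drop t).headI = v.getI t := by
    simp [← List.getI_zero_eq_headI, List.getI]
  simp only [HeadLtTail, head_eq, List.tail_drop, List.mem_drop_iff_getElem, Finset.mem_Ioo]
  constructor
  · rintro h j ⟨htj, hj⟩
    obtain ⟨k, rfl⟩ := Nat.exists_eq_add_of_le htj
    rw [List.getI_eq_getElem _ hj]
    exact h _ ⟨k, by lia, rfl⟩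
  · rintro h _ ⟨k, hk, rfl⟩
    rw [← List.getI_eq_getElem]
    exact h _ (by lia)

end LT

variable [Preorder α]

theorem HeadLtTail.forall_mem_lt_iff {b : List α} (h : HeadLtTail b) (hb : b ≠ []) (a : α) :
    (∀ x ∈ b, a < x) ↔ a < b.headI := by
  obtain ⟨c, v, rfl⟩ := List.exists_cons_of_ne_nil hb
  rw [List.forall_mem_cons, List.headI_cons]
  exact ⟨And.left, fun hac => ⟨hac, fun x hx => hac.trans (h x hx)⟩⟩

theorem headOrdered_cons_iff {b : List α} {L : List (List α)} (hne : ∀ b' ∈ b :: L, b' ≠ []) :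
    HeadOrdered (b :: L) ↔ HeadLtTail (b ++ L.flatten) ∧ HeadOrdered L := by
  obtain ⟨hb, hL⟩ := List.forall_mem_cons.1 hne
  have heads_iff (h : ∀ b' ∈ L, HeadLtTail b') :
      (∀ b' ∈ L, b.headI < b'.headI) ↔ ∀ x ∈ L.flatten, b.headI < x := by
    rw [List.forall_mem_flatten]
    exact forall₂_congr fun b' hb' => ((h b' hb').forall_mem_lt_iff (hL b' hb') _).symm
  simp only [HeadOrdered, List.pairwise_cons, List.forall_mem_cons, headLtTail_append_iff hb]
  tauto

theorem headOrdered_iff_forall_drop {L : List (List α)} (hne : ∀ b ∈ L, b ≠ []) :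
    HeadOrdered L ↔ ∀ j, HeadLtTail (L.drop j).flatten := by
  induction L with
  | nil => simp [HeadOrdered, HeadLtTail]
  | cons b L ih =>
    rw [headOrdered_cons_iff hne, ih (List.forall_mem_cons.1 hne).2]
    exact Nat.and_forall_add_one (p := fun j => HeadLtTail ((b :: L).drop j).flatten)

end HeadOrder

section PartialSums

/-- The set of sums of the nonempty proper prefixes of `l`. Applied to the list of lengths of a
list of blocks, it is the set of positions at which the concatenation is split. -/
def innerPartialSums (l : List ℕ) : Finset ℕ :=
  (Finset.Ico 1 l.length).image fun j => (l.take j).sum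

theorem mem_innerPartialSums_ofFn {m : ℕ} (f : Fin (m + 1) → ℕ) (t : ℕ) :
    t ∈ innerPartialSums (List.ofFn f) ↔
      ∃ j : Fin m,
        t = ∑ l ∈ Finset.univ.filter (fun l : Fin (m + 1) => (l : ℕ) ≤ (j : ℕ)), f l := by
  simp only [innerPartialSums, Finset.mem_image, Finset.mem_Ico, List.length_ofFn,
    List.sum_take_ofFn]
  constructor
  · rintro ⟨j, ⟨hj, hjm⟩, rfl⟩
    obtain ⟨i, rfl⟩ := Nat.exists_eq_add_of_le' hj
    exact ⟨⟨i, by lia⟩, by simp only [Nat.lt_succ_iff]⟩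
  · rintro ⟨j, rfl⟩
    exact ⟨j + 1, by lia, by simp only [Nat.lt_succ_iff]⟩

variable {N : ℕ}

theorem mem_innerPartialSums_blocks (c : Composition N) (t : ℕ) :
    t ∈ innerPartialSums c.blocks ↔ t ∈ Finset.Ioo 0 N ∧ ∃ x ∈ c.boundaries, (x : ℕ) = t := by
  have interior_iff (i : Fin (c.length + 1)) :
      (i : ℕ) ∈ Finset.Ico 1 c.length ↔ (c.boundary i : ℕ) ∈ Finset.Ioo 0 N := by
    have pos_iff : 0 < i ↔ 0 < c.boundary i := by
      rw [← c.boundary.lt_iff_lt, c.boundary_zero]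
    have lt_iff : i < Fin.last _ ↔ c.boundary i < Fin.last _ := by
      rw [← c.boundary.lt_iff_lt, c.boundary_last]
    rw [Finset.mem_Ico, Finset.mem_Ioo]
    exact and_congr pos_iff lt_iff
  simp only [innerPartialSums, Composition.boundaries, Finset.mem_image, Finset.mem_map,
    Finset.mem_univ, true_and]
  constructor
  · rintro ⟨j, hj, rfl⟩
    have hjc : j < c.length + 1 := Nat.lt_succ_of_lt (Finset.mem_Ico.1 hj).2
    exact ⟨(interior_iff ⟨j, hjc⟩).1 hj, _, ⟨⟨j, hjc⟩, rfl⟩, rfl⟩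
  · rintro ⟨ht, _, ⟨i, rfl⟩, rfl⟩
    exact ⟨i, (interior_iff i).2 ht, rfl⟩

theorem innerPartialSums_blocks_subset (c : Composition N) :
    innerPartialSums c.blocks ⊆ Finset.Ioo 0 N :=
  fun t ht => ((mem_innerPartialSums_blocks c t).1 ht).1

theorem innerPartialSums_blocks_injective :
    Function.Injective fun c : Composition N => innerPartialSums c.blocks := by
  intro c c' h
  refine (compositionEquiv N).injective (CompositionAsSet.ext (Finset.ext fun x => ?_))
  change x ∈ c.toCompositionAsSet.boundaries ↔ x ∈ c'.toCompositionAsSet.boundaries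
  rcases eq_or_ne x 0 with rfl | h_zero
  · simp only [CompositionAsSet.zero_mem]
  rcases eq_or_ne x (Fin.last N) with rfl | h_last
  · simp only [CompositionAsSet.getLast_mem]
  have hx : (x : ℕ) ∈ Finset.Ioo 0 N :=
    Finset.mem_Ioo.2 ⟨Fin.pos_iff_ne_zero.2 h_zero, Fin.lt_last_iff_ne_last.2 h_last⟩
  have mem_iff (d : Composition N) : x ∈ d.boundaries ↔ (x : ℕ) ∈ innerPartialSums d.blocks := by
    simp only [mem_innerPartialSums_blocks, hx, true_and, Fin.val_inj, exists_eq_right]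
  exact (mem_iff c).trans ((Finset.ext_iff.1 h x).trans (mem_iff c').symm)

theorem existsUnique_innerPartialSums_blocks_eq {S : Finset ℕ} (hS : S ⊆ Finset.Ioo 0 N) :
    ∃! c : Composition N, innerPartialSums c.blocks = S := by
  let s : CompositionAsSet N :=
    { boundaries := {x | x = 0 ∨ x = Fin.last N ∨ (x : ℕ) ∈ S}
      zero_mem := by simp
      getLast_mem := by simp }
  refine existsUnique_of_exists_of_unique ⟨s.toComposition, ?_⟩
    fun c c' hc hc' => innerPartialSums_blocks_injective (hc.trans hc'.symm)
  ext t
  rw [mem_innerPartialSums_blocks, s.toComposition_boundaries]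
  constructor
  · rintro ⟨ht, x, hx, rfl⟩
    obtain ⟨h_pos, h_lt⟩ := Finset.mem_Ioo.1 ht
    rcases (Finset.mem_filter.1 hx).2 with rfl | rfl | hxS
    · exact absurd h_pos (lt_irrefl _)
    · exact absurd h_lt (lt_irrefl _)
    · exact hxS
  · intro ht
    have h_lt : t < N := (Finset.mem_Ioo.1 (hS ht)).2
    exact ⟨hS ht, ⟨t, h_lt.trans N.lt_succ_self⟩, by simp [s, ht], rfl⟩

end PartialSums

section Splitting

variable {α : Type*}

theorem exists_ofFn_succ_eq {l : List α} (hl : l ≠ []) :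
    ∃ (k : ℕ) (f : Fin (k + 1) → α), List.ofFn f = l := by
  obtain ⟨a, v, rfl⟩ := List.exists_cons_of_ne_nil hl
  exact ⟨v.length, (a :: v).get, List.ofFn_get _⟩

/-- The composition of the length of `L.flatten` into the lengths of the nonempty blocks of `L`. -/
def blockComposition (L : List (List α)) (hne : ∀ b ∈ L, b ≠ []) :
    Composition L.flatten.length where
  blocks := L.map List.length
  blocks_pos := by
    simpa only [List.mem_map, forall_exists_index, and_imp, forall_apply_eq_imp_iff₂,
      List.length_pos_iff] using @hne
  blocks_sum := List.length_flatten.symm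

theorem innerPartialSums_map_length_subset {L : List (List α)} (hne : ∀ b ∈ L, b ≠ []) :
    innerPartialSums (L.map List.length) ⊆ Finset.Ioo 0 L.flatten.length :=
  innerPartialSums_blocks_subset (blockComposition L hne)

theorem existsUnique_splitting (u : List α) {S : Finset ℕ} (hS : S ⊆ Finset.Ioo 0 u.length) :
    ∃! L : List (List α), (∀ b ∈ L, b ≠ []) ∧ L.flatten = u ∧
      innerPartialSums (L.map List.length) = S := by
  obtain ⟨c, hc, hc_unique⟩ := existsUnique_innerPartialSums_blocks_eq hS
  refine ⟨u.splitWrtComposition c, ⟨?_, u.flatten_splitWrtComposition c, ?_⟩, ?_⟩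
  · exact fun b hb => List.length_pos_iff.1 (List.length_pos_of_mem_splitWrtComposition hb)
  · rw [List.map_length_splitWrtComposition, hc]
  · rintro L ⟨hne, rfl, hL⟩
    have hLc : blockComposition L hne = c := hc_unique _ hL
    exact (L.splitWrtComposition_flatten c (congrArg Composition.blocks hLc)).symm

theorem headOrdered_iff_forall_innerPartialSums [Preorder α] [Inhabited α] {L : List (List α)}
    (hne : ∀ b ∈ L, b ≠ []) :
    HeadOrdered L ↔ HeadLtTail L.flatten ∧
      ∀ t ∈ innerPartialSums (L.map List.length), HeadLtTail (L.flatten.drop t) := by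
  simp only [headOrdered_iff_forall_drop hne, innerPartialSums, Finset.forall_mem_image,
    List.drop_sum_flatten, List.length_map, Finset.mem_Ico]
  refine ⟨fun h => ⟨h 0, fun j _ => h j⟩, fun ⟨h_zero, h⟩ j => ?_⟩
  rcases Nat.eq_zero_or_pos j with rfl | hj
  · exact h_zero
  rcases lt_or_ge j L.length with hjL | hjL
  · exact h ⟨hj, hjL⟩
  · simp [List.drop_eq_nil_of_le hjL, HeadLtTail]

end Splitting

section SplitTuple

variable {n m : ℕ} {u : List ℕ}

theorem IsTuple.length_eq (hu : IsTuple n u) : u.length = n + 1 := by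
  simpa using hu.1.length_eq

theorem IsTuple.headLtTail (hu : IsTuple n u) : HeadLtTail u := by
  obtain ⟨a, v, rfl⟩ := List.exists_cons_of_length_eq_add_one hu.length_eq
  obtain rfl : a = 0 := hu.2
  have h_nodup : (0 :: v).Nodup := hu.1.nodup_iff.2 List.nodup_range
  exact fun x hx => Nat.pos_of_ne_zero fun hx0 => (List.nodup_cons.1 h_nodup).1 (hx0 ▸ hx)

theorem mem_cuts_iff (hlen : u.length = n + 1) (t : ℕ) :
    t ∈ Cuts n u ↔ t ∈ Finset.Ioo 0 u.length ∧ HeadLtTail (u.drop t) := by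
  simp only [Cuts, Finset.mem_filter, headLtTail_drop_iff, hlen, Finset.mem_Icc, Finset.mem_Ioo,
    Finset.mem_Ioc, Nat.lt_succ_iff]
  rfl

theorem isSTuple_iff_headOrdered {B : Fin (m + 1) → List ℕ} (hu : IsTuple n u)
    (hne : ∀ i, B i ≠ []) (hflat : (List.ofFn B).flatten = u) :
    IsSTuple n m B ↔ HeadOrdered (List.ofFn B) := by
  rw [IsSTuple, HeadOrdered, List.pairwise_ofFn, List.forall_mem_ofFn_iff, hflat]
  exact ⟨fun h => h.2.2, fun h => ⟨hne, hu.1, h⟩⟩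

theorem isSTuple_iff_innerPartialSums_subset_cuts {B : Fin (m + 1) → List ℕ} (hu : IsTuple n u)
    (hne : ∀ i, B i ≠ []) (hflat : (List.ofFn B).flatten = u) :
    IsSTuple n m B ↔ innerPartialSums ((List.ofFn B).map List.length) ⊆ Cuts n u := by
  have hne_mem : ∀ b ∈ List.ofFn B, b ≠ [] := List.forall_mem_ofFn_iff.2 hne
  have h_range : ∀ t ∈ innerPartialSums ((List.ofFn B).map List.length),
      t ∈ Finset.Ioo 0 u.length :=
    hflat ▸ innerPartialSums_map_length_subset hne_mem
  rw [isSTuple_iff_headOrdered hu hne hflat, headOrdered_iff_forall_innerPartialSums hne_mem,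
    hflat, and_iff_right hu.headLtTail]
  exact forall₂_congr fun t ht => by rw [mem_cuts_iff hu.length_eq, and_iff_right (h_range t ht)]

/-- The fibre of the projection `p` over `u`: the split tuples, with any number of bars, whose
concatenation is `u`. -/
abbrev SplitTuplesOver (n : ℕ) (u : List ℕ) : Type :=
  Σ m : ℕ, {b : STuple n m // (List.ofFn b.B).flatten = u}

namespace SplitTuplesOver

/-- The list of blocks of a split tuple over `u`. -/
def blocks (x : SplitTuplesOver n u) : List (List ℕ) :=
  List.ofFn x.2.1.B

/-- The positions of the bars of a split tuple in its concatenation. -/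
def barPositions (x : SplitTuplesOver n u) : Finset ℕ :=
  innerPartialSums (x.blocks.map List.length)

theorem blocks_ne_nil (x : SplitTuplesOver n u) : ∀ b ∈ x.blocks, b ≠ [] :=
  List.forall_mem_ofFn_iff.2 x.2.1.prop.1

theorem flatten_blocks (x : SplitTuplesOver n u) : x.blocks.flatten = u :=
  x.2.2

theorem blocks_injective : Function.Injective (blocks : SplitTuplesOver n u → List (List ℕ)) := by
  rintro ⟨k, ⟨B, hB⟩, hBu⟩ ⟨k', ⟨B', hB'⟩, hBu'⟩ (h : List.ofFn B = List.ofFn B')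
  obtain rfl : k = k' := by simpa using congrArg List.length h
  obtain rfl := List.ofFn_injective h
  rfl

theorem barPositions_subset_cuts (hu : IsTuple n u) (x : SplitTuplesOver n u) :
    x.barPositions ⊆ Cuts n u :=
  (isSTuple_iff_innerPartialSums_subset_cuts hu x.2.1.prop.1 x.2.2).1 x.2.1.prop

theorem barPositions_injective :
    Function.Injective (barPositions : SplitTuplesOver n u → Finset ℕ) := by
  intro x y hxy
  have h_range : x.barPositions ⊆ Finset.Ioo 0 u.length := by
    have := innerPartialSums_map_length_subset x.blocks_ne_nil
    rwa [x.flatten_blocks] at this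
  exact blocks_injective ((existsUnique_splitting u h_range).unique
    ⟨x.blocks_ne_nil, x.flatten_blocks, rfl⟩ ⟨y.blocks_ne_nil, y.flatten_blocks, hxy.symm⟩)

theorem exists_barPositions_eq (hu : IsTuple n u) {S : Finset ℕ} (hS : S ⊆ Cuts n u) :
    ∃ x : SplitTuplesOver n u, x.barPositions = S := by
  have h_range : S ⊆ Finset.Ioo 0 u.length :=
    fun t ht => ((mem_cuts_iff hu.length_eq t).1 (hS ht)).1
  obtain ⟨L, ⟨hne, hflat, hLS⟩, -⟩ := existsUnique_splitting u h_range
  have hL : L ≠ [] := by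
    rintro rfl
    exact absurd hu.length_eq (by simp [← hflat])
  obtain ⟨k, B, rfl⟩ := exists_ofFn_succ_eq hL
  have hB_ne : ∀ i, B i ≠ [] := fun i => hne _ (List.mem_ofFn.2 ⟨i, rfl⟩)
  have hB : IsSTuple n k B :=
    (isSTuple_iff_innerPartialSums_subset_cuts hu hB_ne hflat).2 (hLS.trans_subset hS)
  exact ⟨⟨k, ⟨B, hB⟩, hflat⟩, hLS⟩

/-- A split tuple over `u` corresponds to the set of positions of its bars. -/
noncomputable def equivSubsetsCuts (hu : IsTuple n u) :
    SplitTuplesOver n u ≃ {S : Finset ℕ // S ⊆ Cuts n u} :=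
  Equiv.ofBijective (fun x => ⟨x.barPositions, x.barPositions_subset_cuts hu⟩)
    ⟨fun _ _ h => barPositions_injective (congrArg Subtype.val h), fun ⟨_, hS⟩ =>
      (exists_barPositions_eq hu hS).imp fun _ hx => Subtype.ext hx⟩

end SplitTuplesOver

end SplitTuple

/-- Lemma 4.31 of Hoffbeck–Vespa.  Let `u ∈ Tuple(n)` and let `B₀, …, Bₘ` be the
splitting of `u` at the positions of a set `T` of cardinality `m` (so the concatenation
of the blocks is `u` and `T` is the set of partial sums `|B₀| + … + |Bⱼ|`, `j < m`).
Then `(B₀ | … | Bₘ)` is an `m`-split `(n+1)`-tuple iff `T ⊆ Cuts(u)`; consequently,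
the set of split tuples `b` (over all `m`) with `p(b) = u` is in bijection with the
power set of `Cuts(u)`. -/
theorem splitting_isSTuple_iff_cuts (n m : ℕ) (u : List ℕ) (hu : IsTuple n u)
    (T : Finset ℕ) (hcard : T.card = m)
    (B : Fin (m + 1) → List ℕ) (hne : ∀ i, B i ≠ [])
    (hflat : (List.ofFn B).flatten = u)
    (hT : ∀ t : ℕ, t ∈ T ↔ ∃ j : Fin m,
      t = ∑ l ∈ Finset.univ.filter (fun l : Fin (m + 1) => (l : ℕ) ≤ (j : ℕ)),
            (B l).length) :
    (IsSTuple n m B ↔ T ⊆ Cuts n u) ∧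
    Nonempty ((Σ m' : ℕ, {b : STuple n m' // (List.ofFn b.B).flatten = u}) ≃
      {S : Finset ℕ // S ⊆ Cuts n u}) := by
  have hT_eq : T = innerPartialSums ((List.ofFn B).map List.length) := by
    ext t
    rw [List.map_ofFn, mem_innerPartialSums_ofFn]
    exact hT t
  refine ⟨?_, ⟨SplitTuplesOver.equivSubsetsCuts hu⟩⟩
  rw [hT_eq]
  exact isSTuple_iff_innerPartialSums_subset_cuts hu hne hflat
end

section
/- Let x = (x_0,…,x_p) and y = (y_0,…,y_q) be lists of natural numbers such that y_0 < y_ℓ for all 1 ≤ ℓ ≤ q, and let S ⊆ {1,…,q} be a nonempty subset. Then the list x *_S y is lexicographically strictly greater than the concatenation xy. -/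
/-- `starOp x y S` is the list `x *_S y`: the entries of `x`, followed by the entries
`y_ℓ` for `ℓ ∈ S` taken in decreasing order of the index `ℓ`, then `y₀`, then the entries
`y_ℓ` for `ℓ ∈ {1,…,|y|-1} ∖ S` taken in increasing order of the index `ℓ`. -/
def starOp (x y : List ℕ) (S : Finset ℕ) : List ℕ :=
  x ++ ((S.sort (· ≤ ·)).reverse.map (fun ℓ => y.getD ℓ 0)) ++
    y.headI :: ((((Finset.Icc 1 (y.length - 1)) \ S).sort (· ≤ ·)).map (fun ℓ => y.getD ℓ 0))

section FinsetSort

variable {α : Type*} [LinearOrder α] (s : Finset α)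

theorem reverse_sort_le_eq_sort_ge : (s.sort (· ≤ ·)).reverse = s.sort (· ≥ ·) :=
  (s.sortedGT_sort.eq_reverse_of_mem_iff_of_sortedLT (by simp) s.sortedLT_sort).symm

theorem sort_ge_eq_max'_cons (hs : s.Nonempty) :
    s.sort (· ≥ ·) = s.max' hs :: (s.erase (s.max' hs)).sort (· ≥ ·) := by
  have max'_ge : ∀ b ∈ s.erase (s.max' hs), s.max' hs ≥ b :=
    fun b hb => s.le_max' b (Finset.mem_of_mem_erase hb)
  rw [← Finset.sort_insert (· ≥ ·) max'_ge (s.notMem_erase _), Finset.insert_erase (s.max'_mem hs)]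

end FinsetSort

theorem exists_starOp_eq_append_getD_max'_cons (x y : List ℕ) {S : Finset ℕ} (hS : S.Nonempty) :
    ∃ t, starOp x y S = x ++ y.getD (S.max' hS) 0 :: t := by
  rw [starOp, reverse_sort_le_eq_sort_ge, sort_ge_eq_max'_cons S hS, List.map_cons,
    List.append_assoc, List.cons_append]
  exact ⟨_, rfl⟩

theorem lex_append_lt_starOp_general (x y : List ℕ) {S : Finset ℕ} (hS : S.Nonempty)
    (hlt : y.headI < y.getD (S.max' hS) 0) :
    List.Lex (· < ·) (x ++ y) (starOp x y S) := by
  obtain ⟨t, ht⟩ := exists_starOp_eq_append_getD_max'_cons x y hS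
  rw [ht]
  apply List.Lex.append_left
  cases y with
  | nil => exact .nil
  | cons y₀ ys => exact .rel hlt

/-- If `y₀ < y_ℓ` for all `1 ≤ ℓ ≤ q` and `S ⊆ {1,…,q}` is nonempty, then the list
`x *_S y` is lexicographically strictly greater than the concatenation `x ++ y`. -/
theorem lex_append_lt_starOp (x y : List ℕ) (hx : x ≠ []) (hy : y ≠ [])
    (hhead : ∀ ℓ : ℕ, 1 ≤ ℓ → ℓ < y.length → y.headI < y.getD ℓ 0)
    (S : Finset ℕ) (hS : S ⊆ Finset.Icc 1 (y.length - 1)) (hSne : S.Nonempty) :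
    List.Lex (· < ·) (x ++ y) (starOp x y S) := by
  obtain ⟨one_le, le_pred⟩ := Finset.mem_Icc.mp (hS (S.max'_mem hSne))
  exact lex_append_lt_starOp_general x y hSne (hhead _ one_le (by omega))
end

section
/- Let (B_0 | B_1 | … | B_m) be an m-split (n+1)-tuple and let i, j be indices with 0 ≤ i < m and i+1 < j ≤ m. Then the concatenated list B_0⋯B_i B_j B_{i+1}⋯B_{j-1} B_{j+1}⋯B_m, obtained by moving the block B_j to the position immediately after B_i, is lexicographically strictly greater than the concatenation B_0B_1⋯B_m. -/
/-! Both concatenations begin with the common prefix `B₀⋯Bᵢ`. Directly after it, the original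
list continues with the head of `Bᵢ₊₁` and the rearranged one with the head of `Bⱼ`. The heads of
the (nonempty) blocks increase strictly and `i + 1 < j`, so this entry decides the comparison. -/

theorem headI_eq_head {α : Type*} [Inhabited α] {l : List α} (hl : l ≠ []) :
    l.headI = l.head hl := by
  cases l with
  | nil => contradiction
  | cons a l => rfl

section Lex

variable {α : Type*} {r : α → α → Prop}

theorem lex_append_append_of_rel_head {s t : List α} (hs : s ≠ []) (ht : t ≠ [])
    (hst : r (s.head hs) (t.head ht)) (u v : List α) : List.Lex r (s ++ u) (t ++ v) := by
  rw [← List.cons_head_tail hs, ← List.cons_head_tail ht]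
  exact List.Lex.rel hst

theorem lex_flatten_take_append_cons_of_rel_head {L : List (List α)} {k : ℕ} (hk : k < L.length)
    {t : List α} (hs : L[k] ≠ []) (ht : t ≠ []) (hst : r (L[k].head hs) (t.head ht))
    (R : List (List α)) : List.Lex r L.flatten (L.take k ++ t :: R).flatten := by
  have hsplit : L.flatten = (L.take k).flatten ++ (L[k] ++ (L.drop (k + 1)).flatten) := by
    rw [← List.flatten_cons, List.getElem_cons_drop, ← List.flatten_append,
      List.take_append_drop]
  rw [hsplit, List.flatten_append, List.flatten_cons]
  exact (lex_append_append_of_rel_head hs ht hst _ _).append_left r _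

theorem lex_flatten_lt_moveBlock_general {m : ℕ} {B : Fin m → List α} (hne : ∀ i, B i ≠ [])
    (hhead : ∀ i j, i < j → r ((B i).head (hne i)) ((B j).head (hne j)))
    {k j : ℕ} (hkj : k < j) (hj : j < m) :
    List.Lex r (List.ofFn B).flatten
      ((List.ofFn B).take k ++ [(List.ofFn B).getD j []] ++
        ((List.ofFn B).drop k).take (j - k) ++ (List.ofFn B).drop (j + 1)).flatten := by
  have hk : k < m := hkj.trans hj
  have hgetD : (List.ofFn B).getD j [] = B ⟨j, hj⟩ := by
    rw [List.getD_eq_getElem _ _ (by rwa [List.length_ofFn]), List.getElem_ofFn]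
  have hgetElem : (List.ofFn B)[k]'(by rwa [List.length_ofFn]) = B ⟨k, hk⟩ :=
    List.getElem_ofFn _
  rw [hgetD, List.append_assoc, List.append_assoc, List.singleton_append]
  apply lex_flatten_take_append_cons_of_rel_head (by rwa [List.length_ofFn])
    (hgetElem ▸ hne ⟨k, hk⟩) (hne ⟨j, hj⟩)
  simpa only [hgetElem] using hhead ⟨k, hk⟩ ⟨j, hj⟩ hkj

end Lex

/-- For an `m`-split `(n+1)`-tuple `(B₀ | … | Bₘ)` and indices `i < m`, `i+1 < j ≤ m`,
the list `B₀⋯Bᵢ Bⱼ Bᵢ₊₁⋯Bⱼ₋₁ Bⱼ₊₁⋯Bₘ` obtained by moving the block `Bⱼ` to the position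
immediately after `Bᵢ` is lexicographically strictly greater than the concatenation
`B₀B₁⋯Bₘ`. -/
theorem lex_flatten_lt_moveBlock (n m : ℕ) (B : Fin (m + 1) → List ℕ)
    (hB : IsSTuple n m B) (i j : ℕ) (h1 : i + 1 < j) (h2 : j ≤ m) :
    List.Lex (· < ·) ((List.ofFn B).flatten)
      ((((List.ofFn B).take (i + 1)) ++ [(List.ofFn B).getD j []] ++
        (((List.ofFn B).drop (i + 1)).take (j - (i + 1))) ++
        ((List.ofFn B).drop (j + 1))).flatten) := by
  obtain ⟨hne, -, hhead, -⟩ := hB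
  refine lex_flatten_lt_moveBlock_general hne (fun a b hab => ?_) h1 (Nat.lt_succ_of_le h2)
  simpa only [headI_eq_head (hne _)] using hhead a b hab
end

section
/- Let k be a commutative ring, n ≥ 1, and b = (B_0 | … | B_m) ∈ STuple(n,m) with m > 0. In the free k-module on STuple(n,m-1), the element D(b) - Σ_{i=0}^{m-1} (-1)^{i+1} (B_0 | … | B_{i-1} | B_iB_{i+1} | B_{i+2} | … | B_m) is a k-linear combination of split tuples b' ∈ STuple(n,m-1) whose projection p(b') is lexicographically strictly greater than p(b). In particular, for every u ∈ Tuple(n), D maps the submodule spanned by {b : p(b) ≥ u} into the submodule spanned by {b' : p(b') ≥ u}, i.e. D is compatible with the filtration indexed by Tuple(n). -/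
/-- The projection `p` sending `(B₀ | … | Bₘ)` to the concatenation `B₀B₁⋯Bₘ`. -/
def pval {m : ℕ} (B : Fin (m + 1) → List ℕ) : List ℕ := (List.ofFn B).flatten

/-- The family of blocks obtained from `(B₀ | … | B_{m+1})` by replacing `Bᵢ` with
`Bᵢ *_S Bⱼ` and omitting the block `Bⱼ` (for `i < j`). -/
def removeReplace {m : ℕ} (B : Fin (m + 2) → List ℕ) (i j : Fin (m + 2)) (S : Finset ℕ) :
    Fin (m + 1) → List ℕ :=
  fun l => if (l : ℕ) < (j : ℕ) then
      (if (l : ℕ) = (i : ℕ) then starOp (B l.castSucc) (B j) S else B l.castSucc)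
    else B l.succ

/-- The degree-`m` part `K(n)_m`: the free `k`-module on `STuple(n,m)`. -/
abbrev Kmod (k : Type*) [CommRing k] (n m : ℕ) : Type _ := STuple n m →₀ k

open Classical in
/-- The basis element of `K(n)_m` attached to a family of blocks when it is an `m`-split
`(n+1)`-tuple (and `0` otherwise). -/
noncomputable def toBasisK (k : Type*) [CommRing k] (n m : ℕ) (B : Fin (m + 1) → List ℕ) :
    Kmod k n m :=
  if h : IsSTuple n m B then Finsupp.single ⟨B, h⟩ 1 else 0

/-- The map `D : K(n)_{m+1} → K(n)_m`, defined on a basis element `b = (B₀|…|B_{m+1})` by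
`D(b) = Σ_{0≤i<j≤m+1} (-1)ʲ Σ_{S ⊆ {1,…,|Bⱼ|-1}} (-1)^{|S|}
  (B₀ | … | Bᵢ₋₁ | Bᵢ *_S Bⱼ | Bᵢ₊₁ | … | B̂ⱼ | … | B_{m+1})`. -/
noncomputable def Dmap (k : Type*) [CommRing k] (n m : ℕ) :
    Kmod k n (m + 1) →ₗ[k] Kmod k n m :=
  Finsupp.lift (Kmod k n m) k (STuple n (m + 1))
    (fun b => ∑ j : Fin (m + 2), ∑ i : Fin (m + 2),
      if (i : ℕ) < (j : ℕ) then
        ((-1 : ℤ) ^ (j : ℕ)) • ∑ S ∈ (Finset.Icc 1 ((b.B j).length - 1)).powerset,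
          ((-1 : ℤ) ^ S.card) • toBasisK k n m (removeReplace b.B i j S)
      else 0)

/-- Merging two consecutive blocks `Bᵢ` and `Bᵢ₊₁` into their concatenation. -/
def mergeAt {m : ℕ} (B : Fin (m + 2) → List ℕ) (i : Fin (m + 1)) : Fin (m + 1) → List ℕ :=
  fun l => if l = i then B i.castSucc ++ B i.succ
    else if l < i then B l.castSucc else B l.succ

/-!
Write `p(b) = P Bᵢ Bᵢ₊₁ R` with `P = B₀⋯Bᵢ₋₁`. The projection of the term of `D(b)` indexed by
`(i, j, S)` starts with `P Bᵢ a`, where `a` is the head of `Bⱼ` if `S = ∅`, and the entry of `Bⱼ` at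
position `max S` otherwise. At the same place `p(b)` has the head of `Bᵢ₊₁`. If `j > i + 1`, then
`a ≥ head Bⱼ > head Bᵢ₊₁` because heads increase; if `j = i + 1` and `S ≠ ∅`, then `a > head Bᵢ₊₁`
because the head of a block is its strict minimum. So all these terms have a projection greater
than `p(b)`. The remaining terms, with `j = i + 1` and `S = ∅`, are the signed merges of consecutive
blocks, and merging does not change the projection.
-/

section Lists

variable {α : Type*}

theorem append_lt_append_of_headI_lt [Inhabited α] [LT α] {x y : List α} (hx : x ≠ [])
    (hy : y ≠ []) (h : x.headI < y.headI) (v w : List α) : x ++ v < y ++ w := by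
  obtain ⟨a, s, rfl⟩ := List.exists_cons_of_ne_nil hx
  obtain ⟨c, t, rfl⟩ := List.exists_cons_of_ne_nil hy
  exact List.Lex.rel h

theorem getD_mem_tail {y : List α} {l : ℕ} (hl : l ∈ Finset.Icc 1 (y.length - 1)) (d : α) :
    y.getD l d ∈ y.tail := by
  obtain ⟨hl_pos, hl_le⟩ := Finset.mem_Icc.mp hl
  have hl_lt : l - 1 < y.tail.length := by rw [List.length_tail]; omega
  have hget : y.getD l d = y.tail[l - 1] := by
    rw [List.getElem_tail, List.getD_eq_getElem _ _ (by omega)]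
    simp only [Nat.sub_add_cancel hl_pos]
  exact hget ▸ List.getElem_mem hl_lt

theorem sort_Icc_one (n : ℕ) : (Finset.Icc 1 n).sort (· ≤ ·) = List.range' 1 n := by
  rw [← List.toFinset_range'_1_1, List.toFinset_sort _ List.nodup_range']
  exact List.pairwise_le_range'

theorem map_getD_sort_Icc_one (y : List α) (d : α) :
    ((Finset.Icc 1 (y.length - 1)).sort (· ≤ ·)).map (fun l => y.getD l d) = y.tail := by
  rw [sort_Icc_one]
  refine List.ext_getElem (by simp) fun l _ hl => ?_
  rw [List.length_tail] at hl
  simp [Nat.add_comm 1 l, show l + 1 < y.length by omega]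

theorem isUpperSet_setOf_eq_or_lex [LinearOrder α] (u : List α) :
    IsUpperSet {v | v = u ∨ List.Lex (· < ·) u v} := by
  have hIci : {v | v = u ∨ List.Lex (· < ·) u v} = Set.Ici u :=
    Set.ext fun v => (or_congr_left eq_comm).trans (le_iff_eq_or_lt (a := u) (b := v)).symm
  exact hIci ▸ isUpperSet_Ici u

end Lists

section StarOp

variable {x y : List ℕ} {S : Finset ℕ}

theorem starOp_eq_append (x y : List ℕ) (S : Finset ℕ) : starOp x y S = x ++ starOp [] y S := by
  simp only [starOp, List.append_assoc, List.nil_append]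

theorem starOp_ne_nil : starOp x y S ≠ [] := by
  simp [starOp]

theorem starOp_empty (x : List ℕ) (hy : y ≠ []) : starOp x y ∅ = x ++ y := by
  obtain ⟨a, t, rfl⟩ := List.exists_cons_of_ne_nil hy
  simp only [starOp, Finset.sort_empty, List.reverse_nil, List.map_nil, List.append_nil,
    Finset.sdiff_empty, map_getD_sort_Icc_one, List.headI_cons, List.tail_cons]

theorem exists_headI_starOp_nil_eq_getD (y : List ℕ) (hS : S.Nonempty) :
    ∃ l ∈ S, (starOp [] y S).headI = y.getD l 0 := by
  have hne : (S.sort (· ≤ ·)).reverse ≠ [] := by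
    simpa [← List.length_eq_zero_iff] using hS.ne_empty
  obtain ⟨l, ls, hl⟩ := List.exists_cons_of_ne_nil hne
  have hmem : l ∈ (S.sort (· ≤ ·)).reverse := hl ▸ List.mem_cons_self
  refine ⟨l, by simpa using hmem, ?_⟩
  rw [starOp, hl]
  rfl

theorem headI_lt_headI_starOp_nil (hy : ∀ z ∈ y.tail, y.headI < z)
    (hS : S ⊆ Finset.Icc 1 (y.length - 1)) (hne : S.Nonempty) :
    y.headI < (starOp [] y S).headI := by
  obtain ⟨l, hl, heq⟩ := exists_headI_starOp_nil_eq_getD y hne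
  exact heq ▸ hy _ (getD_mem_tail (hS hl) 0)

theorem headI_le_headI_starOp_nil (hy : ∀ z ∈ y.tail, y.headI < z)
    (hS : S ⊆ Finset.Icc 1 (y.length - 1)) : y.headI ≤ (starOp [] y S).headI := by
  rcases S.eq_empty_or_nonempty with rfl | hne
  · simp [starOp]
  · exact (headI_lt_headI_starOp_nil hy hS hne).le

end StarOp

section Projection

variable {m : ℕ}

theorem pval_succ (B : Fin (m + 2) → List ℕ) : pval B = B 0 ++ pval (Fin.tail B) := by
  simp only [pval, List.ofFn_succ (f := B), List.flatten_cons, Fin.tail_def]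

theorem pval_cons (x : List ℕ) (B : Fin (m + 1) → List ℕ) :
    pval (Fin.cons x B : Fin (m + 2) → List ℕ) = x ++ pval B := by
  rw [pval_succ, Fin.cons_zero, Fin.tail_cons]

theorem mergeAt_succ (B : Fin (m + 3) → List ℕ) (i : Fin (m + 1)) :
    mergeAt B i.succ = Fin.cons (B 0) (mergeAt (Fin.tail B) i) := by
  funext l
  cases l using Fin.cases <;> simp [mergeAt, Fin.tail_def, (Fin.succ_ne_zero _).symm]

theorem pval_mergeAt_zero (B : Fin (m + 2) → List ℕ) : pval (mergeAt B 0) = pval B := by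
  simp [pval, mergeAt]

theorem pval_mergeAt (B : Fin (m + 2) → List ℕ) (i : Fin (m + 1)) :
    pval (mergeAt B i) = pval B := by
  induction m with
  | zero => exact i.fin_one_eq_zero ▸ pval_mergeAt_zero B
  | succ m ih =>
    cases i using Fin.cases with
    | zero => exact pval_mergeAt_zero B
    | succ i => rw [mergeAt_succ, pval_cons, ih, pval_succ B]

theorem removeReplace_empty {B : Fin (m + 2) → List ℕ} {i : Fin (m + 1)} (h : B i.succ ≠ []) :
    removeReplace B i.castSucc i.succ ∅ = mergeAt B i := by
  funext l
  rcases lt_trichotomy l i with hl | rfl | hl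
  · simp [removeReplace, mergeAt, hl, hl.ne, Fin.val_ne_of_ne hl.ne, Nat.lt_succ_of_lt hl]
  · simp [removeReplace, mergeAt, starOp_empty _ h]
  · simp [removeReplace, mergeAt, hl.ne', hl.not_gt, hl.not_ge]

theorem removeReplace_succ (B : Fin (m + 3) → List ℕ) (i j : Fin (m + 2)) (S : Finset ℕ) :
    removeReplace B i.succ j.succ S = Fin.cons (B 0) (removeReplace (Fin.tail B) i j S) := by
  funext l
  cases l using Fin.cases <;> simp [removeReplace, Fin.tail_def]

theorem pval_lt_pval_removeReplace_zero {B : Fin (m + 2) → List ℕ} {j : Fin (m + 1)}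
    {S : Finset ℕ} (hne : B 1 ≠ []) (h : (B 1).headI < (starOp [] (B j.succ) S).headI) :
    pval B < pval (removeReplace B 0 j.succ S) := by
  have hzero : removeReplace B 0 j.succ S 0 = B 0 ++ starOp [] (B j.succ) S := by
    rw [← starOp_eq_append]
    simp [removeReplace]
  simp only [pval, List.ofFn_succ, List.flatten_cons, hzero, List.append_assoc]
  exact List.append_left_lt (append_lt_append_of_headI_lt hne starOp_ne_nil h _ _)

theorem pval_lt_pval_removeReplace {B : Fin (m + 2) → List ℕ} {i j : Fin (m + 1)} (hij : i ≤ j)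
    {S : Finset ℕ} (hne : B i.succ ≠ [])
    (h : (B i.succ).headI < (starOp [] (B j.succ) S).headI) :
    pval B < pval (removeReplace B i.castSucc j.succ S) := by
  induction m with
  | zero =>
    obtain rfl := i.fin_one_eq_zero
    exact pval_lt_pval_removeReplace_zero hne h
  | succ m ih =>
    cases i using Fin.cases with
    | zero => exact pval_lt_pval_removeReplace_zero hne h
    | succ i =>
      obtain ⟨j, rfl⟩ := Fin.exists_succ_eq.mpr (Fin.pos_iff_ne_zero.mp (i.succ_pos.trans_le hij))
      rw [Fin.castSucc_succ, removeReplace_succ, pval_cons, pval_succ B]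
      exact List.append_left_lt (ih (Fin.succ_le_succ_iff.mp hij) hne h)

theorem STuple.pval_lt_pval_removeReplace_of_lt {n : ℕ} (b : STuple n (m + 1)) {i j : Fin (m + 1)}
    (hij : i < j) {S : Finset ℕ} (hS : S ⊆ Finset.Icc 1 ((b.B j.succ).length - 1)) :
    pval b.B < pval (removeReplace b.B i.castSucc j.succ S) := by
  obtain ⟨hne, -, hheads, hmin⟩ := b.prop
  exact pval_lt_pval_removeReplace hij.le (hne _) <|
    (hheads _ _ (Fin.succ_lt_succ_iff.mpr hij)).trans_le (headI_le_headI_starOp_nil (hmin _) hS)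

theorem STuple.pval_lt_pval_removeReplace_of_nonempty {n : ℕ} (b : STuple n (m + 1))
    (i : Fin (m + 1)) {S : Finset ℕ} (hS : S ⊆ Finset.Icc 1 ((b.B i.succ).length - 1))
    (hne : S.Nonempty) : pval b.B < pval (removeReplace b.B i.castSucc i.succ S) :=
  pval_lt_pval_removeReplace le_rfl (b.prop.1 _)
    (headI_lt_headI_starOp_nil (b.prop.2.2.2 _) hS hne)

end Projection

section Filtration

variable (k : Type*) [CommRing k] {n m : ℕ}

/-- The submodule of `K(n)_m` spanned by the split tuples whose projection lies in `U`. The step of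
index `u` of the filtration of `K(n)_m` is the case where `U` is the set of lists `≥ u`. -/
noncomputable def projSpan (n m : ℕ) (U : Set (List ℕ)) : Submodule k (Kmod k n m) :=
  Submodule.span k {x | ∃ b : STuple n m, pval b.B ∈ U ∧ x = Finsupp.single b 1}

theorem projSpan_mono {U V : Set (List ℕ)} (h : U ⊆ V) : projSpan k n m U ≤ projSpan k n m V :=
  Submodule.span_mono fun _ ⟨b, hb, hx⟩ => ⟨b, h hb, hx⟩

theorem toBasisK_mem_projSpan {U : Set (List ℕ)} {B : Fin (m + 1) → List ℕ} (h : pval B ∈ U) :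
    toBasisK k n m B ∈ projSpan k n m U := by
  rw [toBasisK]
  split_ifs with hB
  · exact Submodule.subset_span ⟨⟨B, hB⟩, h, rfl⟩
  · exact zero_mem _

/-- The inner sum `Σ_S (-1)^{|S|} (B₀ | … | Bᵢ *_S Bⱼ | … | B̂ⱼ | … | B_{m+1})` of `D(b)`, over
`S ⊆ {1,…,|Bⱼ|-1}`. -/
noncomputable def starSum (b : STuple n (m + 1)) (i j : Fin (m + 2)) : Kmod k n m :=
  ∑ S ∈ (Finset.Icc 1 ((b.B j).length - 1)).powerset,
    ((-1 : ℤ) ^ S.card) • toBasisK k n m (removeReplace b.B i j S)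

theorem Dmap_single (b : STuple n (m + 1)) :
    Dmap k n m (Finsupp.single b 1) = ∑ j : Fin (m + 1),
      ((-1 : ℤ) ^ ((j : ℕ) + 1)) • ∑ i ∈ Finset.Iic j, starSum k b i.castSucc j.succ := by
  have hD : Dmap k n m (Finsupp.single b 1) = ∑ j : Fin (m + 2), ∑ i : Fin (m + 2),
      if (i : ℕ) < j then ((-1 : ℤ) ^ (j : ℕ)) • starSum k b i j else 0 := by
    simp [Dmap, starSum]
  rw [hD, Fin.sum_univ_succ]
  simp only [Fin.val_zero, Nat.not_lt_zero, if_false, Finset.sum_const_zero, zero_add]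
  refine Finset.sum_congr rfl fun j _ => ?_
  rw [Fin.sum_univ_castSucc, if_neg (by simp [j.is_le]), add_zero,
    ← Finset.sum_filter, Finset.smul_sum]
  exact Finset.sum_congr (by ext i; simp) fun _ _ => rfl

theorem starSum_mem_projSpan (b : STuple n (m + 1)) {i j : Fin (m + 1)} (hij : i < j) :
    starSum k b i.castSucc j.succ ∈ projSpan k n m (Set.Ioi (pval b.B)) :=
  sum_mem fun _ hS => zsmul_mem (toBasisK_mem_projSpan k
    (b.pval_lt_pval_removeReplace_of_lt hij (Finset.mem_powerset.mp hS))) _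

theorem starSum_sub_mergeAt_mem_projSpan (b : STuple n (m + 1)) (i : Fin (m + 1)) :
    starSum k b i.castSucc i.succ - toBasisK k n m (mergeAt b.B i) ∈
      projSpan k n m (Set.Ioi (pval b.B)) := by
  rw [starSum, ← Finset.add_sum_erase _ _ (Finset.empty_mem_powerset _), Finset.card_empty,
    pow_zero, one_smul, removeReplace_empty (b.prop.1 _), add_sub_cancel_left]
  refine sum_mem fun S hS => zsmul_mem (toBasisK_mem_projSpan k ?_) _
  obtain ⟨hne, hsub⟩ := Finset.mem_erase.mp hS
  exact b.pval_lt_pval_removeReplace_of_nonempty i (Finset.mem_powerset.mp hsub)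
    (Finset.nonempty_iff_ne_empty.mpr hne)

theorem Dmap_single_sub_sum_mergeAt_mem_projSpan (b : STuple n (m + 1)) :
    Dmap k n m (Finsupp.single b 1) -
        ∑ i : Fin (m + 1), ((-1 : ℤ) ^ ((i : ℕ) + 1)) • toBasisK k n m (mergeAt b.B i) ∈
      projSpan k n m (Set.Ioi (pval b.B)) := by
  rw [Dmap_single, ← Finset.sum_sub_distrib]
  refine sum_mem fun j _ => ?_
  rw [← zsmul_sub, ← Finset.Iio_insert, Finset.sum_insert (by simp),
    add_sub_right_comm]
  exact zsmul_mem (add_mem (starSum_sub_mergeAt_mem_projSpan k b j)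
    (sum_mem fun i hi => starSum_mem_projSpan k b (Finset.mem_Iio.mp hi))) _

theorem projSpan_le_comap_Dmap {U : Set (List ℕ)} (hU : IsUpperSet U) :
    projSpan k n (m + 1) U ≤ (projSpan k n m U).comap (Dmap k n m) := by
  refine Submodule.span_le.mpr ?_
  rintro _ ⟨b, hb, rfl⟩
  have hgreater := projSpan_mono k (hU.Ioi_subset hb) (Dmap_single_sub_sum_mergeAt_mem_projSpan k b)
  have hmerge : ∑ i : Fin (m + 1), ((-1 : ℤ) ^ ((i : ℕ) + 1)) • toBasisK k n m (mergeAt b.B i) ∈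
      projSpan k n m U :=
    sum_mem fun i _ => zsmul_mem (toBasisK_mem_projSpan k (by rwa [pval_mergeAt])) _
  simpa using add_mem hgreater hmerge

end Filtration

/-- Lemma 4.22 of Hoffbeck–Vespa: for a split tuple `b = (B₀ | … | B_{m+1})`, the
difference `D(b) - Σᵢ (-1)^{i+1} (B₀ | … | BᵢBᵢ₊₁ | … | B_{m+1})` is a `k`-linear
combination of split tuples `b'` with `p(b')` lexicographically strictly greater than
`p(b)`; in particular, for every `u ∈ Tuple(n)`, `D` maps the submodule spanned by the
split tuples `b` with `p(b) ≥ u` into the submodule spanned by the split tuples `b'`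
with `p(b') ≥ u`, i.e. `D` is compatible with the filtration indexed by `Tuple(n)`. -/
theorem Dmap_filtration_compatible (k : Type*) [CommRing k] (n m : ℕ) (hn : 1 ≤ n) :
    (∀ b : STuple n (m + 1),
      (Dmap k n m (Finsupp.single b 1) -
          ∑ i : Fin (m + 1), ((-1 : ℤ) ^ ((i : ℕ) + 1)) • toBasisK k n m (mergeAt b.B i))
        ∈ Submodule.span k {x : Kmod k n m | ∃ b' : STuple n m,
            List.Lex (· < ·) (pval b.B) (pval b'.B) ∧ x = Finsupp.single b' 1}) ∧
    (∀ u : List ℕ, IsTuple n u →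
      ∀ x ∈ Submodule.span k {x : Kmod k n (m + 1) | ∃ b : STuple n (m + 1),
          (pval b.B = u ∨ List.Lex (· < ·) u (pval b.B)) ∧ x = Finsupp.single b 1},
        Dmap k n m x ∈ Submodule.span k {x : Kmod k n m | ∃ b' : STuple n m,
          (pval b'.B = u ∨ List.Lex (· < ·) u (pval b'.B)) ∧ x = Finsupp.single b' 1}) := by
  refine ⟨Dmap_single_sub_sum_mergeAt_mem_projSpan k, fun u _ x hx => ?_⟩
  exact projSpan_le_comap_Dmap k (isUpperSet_setOf_eq_or_lex u) hx
end
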